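/- Convolutional stability: if ρ and σ are n-qudit stabilizer states, then ρ ⊠ σ is a stabilizer state. -/

import Mathlib

open scoped BigOperators ComplexOrder Classical ENNReal
open Matrix

namespace PaperQI

/-- The computational-basis index set `ℤ_d^n` for an `n`-qudit system. -/
abbrev QV (d n : ℕ) := Fin n → ZMod d

/-- Matrices (linear operators) on the `n`-qudit Hilbert space `(ℂ^d)^{⊗ n}`,
written in the computational basis indexed by `ℤ_d^n`. -/
abbrev Mat (d n : ℕ) := Matrix (QV d n) (QV d n) ℂ

/-- The character `ξ^z = exp(2πi z/d)` for `z ∈ ℤ_d`. -/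
noncomputable def ch (d : ℕ) (z : ZMod d) : ℂ :=
  Complex.exp (2 * Real.pi * Complex.I * (z.val : ℂ) / (d : ℂ))

/-- Dot product on `ℤ_d^n`. -/
def qdot {d n : ℕ} (p k : QV d n) : ZMod d := ∑ i, p i * k i

/-- The `n`-qudit Weyl operator `w(p,q) = ⊗_i ξ^{-2⁻¹ p_i q_i} Z^{p_i} X^{q_i}`
(for odd prime `d`).  Its matrix entries are
`w(p,q)[k+q, k] = ξ^{p·k + 2⁻¹ p·q}`. -/
noncomputable def weyl (d n : ℕ) [Fact (Nat.Prime d)] (p q : QV d n) : Mat d n :=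
  Matrix.of fun k' k =>
    if k' = k + q then ch d (qdot p k + (2 : ZMod d)⁻¹ * qdot p q) else 0

/-- `ρ` is an `n`-qudit state: positive semidefinite with trace one. -/
def IsState (d n : ℕ) [Fact (Nat.Prime d)] (ρ : Mat d n) : Prop :=
  ρ.PosSemidef ∧ ρ.trace = 1

/-- The characteristic function `Ξ_ρ(p,q) = Tr[ρ w(-p,-q)]`. -/
noncomputable def xi (d n : ℕ) [Fact (Nat.Prime d)] (ρ : Mat d n)
    (pq : QV d n × QV d n) : ℂ :=
  (ρ * weyl d n (-pq.1) (-pq.2)).trace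

/-- The mean state `M(ρ) = d^{-n} ∑_{|Ξ_ρ(p,q)| = 1} Ξ_ρ(p,q) w(p,q)`. -/
noncomputable def meanState (d n : ℕ) [Fact (Nat.Prime d)] (ρ : Mat d n) : Mat d n :=
  ((d : ℂ) ^ n)⁻¹ •
    ∑ pq : QV d n × QV d n,
      if ‖xi d n ρ pq‖ = 1 then xi d n ρ pq • weyl d n pq.1 pq.2 else 0

/-- `ρ` is a minimal stabilizer-projection state (MSPS): for some `r ≤ n` there are
mutually commuting Weyl operators `w(p_i,q_i)`, `i = 1,…,r`, whose labels generate a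
subgroup of `V^n` of order `d^r`, and phases `x ∈ ℤ_d^r`, such that
`ρ = d^{-(n-r)} ∏_i ( (1/d) ∑_{k ∈ ℤ_d} (ξ^{x_i} w(p_i,q_i))^k )`. -/
noncomputable def IsMSPS (d n : ℕ) [Fact (Nat.Prime d)] (ρ : Mat d n) : Prop :=
  ∃ r : ℕ, r ≤ n ∧
    ∃ (p q : Fin r → QV d n) (x : Fin r → ZMod d),
      (∀ i j, Commute (weyl d n (p i) (q i)) (weyl d n (p j) (q j))) ∧
      Nat.card (AddSubgroup.closure (Set.range fun i => (p i, q i)) :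
        AddSubgroup (QV d n × QV d n)) = d ^ r ∧
      ρ = ((d : ℂ) ^ (n - r))⁻¹ •
        (List.ofFn fun i =>
          (d : ℂ)⁻¹ • ∑ k : ZMod d, (ch d (x i) • weyl d n (p i) (q i)) ^ k.val).prod

/-- The magic gap `MG(ρ) = 1 - max{|Ξ_ρ(p,q)| : Ξ_ρ(p,q) ≠ 0, |Ξ_ρ(p,q)| ≠ 1}`,
and `MG(ρ) = 0` if this set is empty. -/
noncomputable def magicGap (d n : ℕ) [Fact (Nat.Prime d)] (ρ : Mat d n) : ℝ :=
  let s : Finset ℝ :=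
    (Finset.univ.filter fun pq : QV d n × QV d n =>
      xi d n ρ pq ≠ 0 ∧ ‖xi d n ρ pq‖ ≠ 1).image
      fun pq => ‖xi d n ρ pq‖
  if h : s.Nonempty then 1 - s.max' h else 0

/-- Von Neumann entropy `H(ρ) = -∑ λ_i log λ_i` (natural log, eigenvalues of `ρ`),
with the convention `0 log 0 = 0`; junk value `0` on non-Hermitian matrices. -/
noncomputable def vnEnt {d n : ℕ} [Fact (Nat.Prime d)] (ρ : Mat d n) : ℝ :=
  if h : ρ.IsHermitian then -∑ i, h.eigenvalues i * Real.log (h.eigenvalues i) else 0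

/-- Rényi entropy `H_α` for `α ∈ [0,∞]`:  `H_0 = log rank`, `H_1 = H` (von Neumann),
`H_∞ = -log λ_max`, and `H_α = (1-α)⁻¹ log ∑ λ_i^α` otherwise. -/
noncomputable def renyiEnt {d n : ℕ} [Fact (Nat.Prime d)] (α : ℝ≥0∞) (ρ : Mat d n) : ℝ :=
  if h : ρ.IsHermitian then
    if α = 0 then Real.log (ρ.rank : ℝ)
    else if α = 1 then -∑ i, h.eigenvalues i * Real.log (h.eigenvalues i)
    else if α = ⊤ then -Real.log (⨆ i, h.eigenvalues i)
    else (1 - α.toReal)⁻¹ * Real.log (∑ i, h.eigenvalues i ^ α.toReal)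
  else 0

/-- Matrix logarithm on the support: `log ρ = U diag(log λ_i) U†` via the spectral
decomposition, with `log 0 = 0` on the kernel; junk value `0` off Hermitian matrices. -/
noncomputable def matLog {d n : ℕ} [Fact (Nat.Prime d)] (ρ : Mat d n) : Mat d n :=
  if h : ρ.IsHermitian then
    (h.eigenvectorUnitary : Mat d n) *
      Matrix.diagonal (fun i => (Real.log (h.eigenvalues i) : ℂ)) *
      star (h.eigenvectorUnitary : Mat d n)
  else 0

/-- Matrix real power on the support: `ρ^t = U diag(λ_i^t) U†`, with `0^t = 0` on the
kernel (for `t ≠ 0`); junk value `0` off Hermitian matrices. -/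
noncomputable def matRpow {d n : ℕ} [Fact (Nat.Prime d)] (ρ : Mat d n) (t : ℝ) : Mat d n :=
  if h : ρ.IsHermitian then
    (h.eigenvectorUnitary : Mat d n) *
      Matrix.diagonal (fun i => ((h.eigenvalues i ^ t : ℝ) : ℂ)) *
      star (h.eigenvectorUnitary : Mat d n)
  else 0

/-- Support inclusion `supp ρ ⊆ supp σ`, expressed as `ker σ ⊆ ker ρ`
(the correct notion for positive semidefinite matrices). -/
def suppLE {d n : ℕ} [Fact (Nat.Prime d)] (ρ σ : Mat d n) : Prop :=
  ∀ v : QV d n → ℂ, σ.mulVec v = 0 → ρ.mulVec v = 0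

/-- Relative entropy `D(ρ‖σ) = Tr[ρ(log ρ - log σ)]` when `supp ρ ⊆ supp σ`, else `+∞`. -/
noncomputable def relEnt {d n : ℕ} [Fact (Nat.Prime d)] (ρ σ : Mat d n) : EReal :=
  if suppLE ρ σ then (((ρ * (matLog ρ - matLog σ)).trace.re : ℝ) : EReal) else ⊤

/-- Sandwiched Rényi relative entropy
`D_α(ρ‖σ) = (α-1)⁻¹ log Tr[(σ^{(1-α)/(2α)} ρ σ^{(1-α)/(2α)})^α]` for `α ≠ 1`
(with `+∞` when `supp ρ ⊄ supp σ`), and `D_1 = D` the relative entropy. -/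
noncomputable def sandRenyi {d n : ℕ} [Fact (Nat.Prime d)] (α : ℝ) (ρ σ : Mat d n) :
    EReal :=
  if α = 1 then relEnt ρ σ
  else if suppLE ρ σ then
    let x : ℝ := (α - 1)⁻¹ * Real.log
      ((matRpow (matRpow σ ((1 - α) / (2 * α)) * ρ * matRpow σ ((1 - α) / (2 * α)))
        α).trace.re)
    (x : EReal)
  else ⊤

/-- The key unitary `U|i,j⟩ = |N g₁₁ i - N g₁₀ j, -N g₀₁ i + N g₀₀ j⟩`,
where `N = (det G)⁻¹` in `ℤ_d`. -/
noncomputable def convU (d n : ℕ) [Fact (Nat.Prime d)] (g00 g01 g10 g11 : ZMod d) :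
    Matrix (QV d n × QV d n) (QV d n × QV d n) ℂ :=
  Matrix.of fun kl ij =>
    if kl = ((fun a => (g00 * g11 - g01 * g10)⁻¹ * g11 * ij.1 a
                      - (g00 * g11 - g01 * g10)⁻¹ * g10 * ij.2 a : QV d n),
             (fun a => -((g00 * g11 - g01 * g10)⁻¹ * g01) * ij.1 a
                      + (g00 * g11 - g01 * g10)⁻¹ * g00 * ij.2 a : QV d n))
    then 1 else 0

/-- Tensor (Kronecker) product of two `n`-qudit operators, on the doubled system. -/
def kron {d n : ℕ} (ρ σ : Mat d n) : Matrix (QV d n × QV d n) (QV d n × QV d n) ℂ :=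
  Matrix.of fun ij kl => ρ ij.1 kl.1 * σ ij.2 kl.2

/-- Partial trace over the second `n`-qudit factor. -/
noncomputable def ptrB {d n : ℕ} [Fact (Nat.Prime d)]
    (M : Matrix (QV d n × QV d n) (QV d n × QV d n) ℂ) : Mat d n :=
  Matrix.of fun i i' => ∑ j : QV d n, M (i, j) (i', j)

/-- The convolution `ρ ⊠ σ = Tr_B[U (ρ ⊗ σ) U†]` with parameter matrix
`G = [g₀₀, g₀₁; g₁₀, g₁₁]`. -/
noncomputable def conv (d n : ℕ) [Fact (Nat.Prime d)] (g00 g01 g10 g11 : ZMod d)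
    (ρ σ : Mat d n) : Mat d n :=
  ptrB (convU d n g00 g01 g10 g11 * kron ρ σ * (convU d n g00 g01 g10 g11)ᴴ)

/-- The beam-splitter unitary `U_{s,t}|i,j⟩ = |s i + t j, t i - s j⟩`. -/
noncomputable def bsU (d n : ℕ) [Fact (Nat.Prime d)] (s t : ZMod d) :
    Matrix (QV d n × QV d n) (QV d n × QV d n) ℂ :=
  Matrix.of fun kl ij =>
    if kl = ((fun a => s * ij.1 a + t * ij.2 a : QV d n),
             (fun a => t * ij.1 a - s * ij.2 a : QV d n))
    then 1 else 0

/-- The beam-splitter convolution `ρ ⊠_{s,t} σ = Tr_B[U_{s,t} (ρ ⊗ σ) U_{s,t}†]`. -/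
noncomputable def bsConv (d n : ℕ) [Fact (Nat.Prime d)] (s t : ZMod d)
    (ρ σ : Mat d n) : Mat d n :=
  ptrB (bsU d n s t * kron ρ σ * (bsU d n s t)ᴴ)

/-- Iterated self-convolution: `⊠^0 ρ = ρ` and `⊠^{N+1} ρ = (⊠^N ρ) ⊠ ρ`. -/
noncomputable def bsIter (d n : ℕ) [Fact (Nat.Prime d)] (s t : ZMod d) :
    ℕ → Mat d n → Mat d n
  | 0, ρ => ρ
  | N + 1, ρ => bsConv d n s t (bsIter d n s t N ρ) ρ

/-- `ρ` is the pure stabilizer state `|ψ⟩⟨ψ|` with stabilizer label group `S ⊆ V^n`: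
`S` has order `d^n` and `ψ` is a common eigenvector of all `w(p,q)`, `(p,q) ∈ S`. -/
noncomputable def IsPureStabilizerWithGroup (d n : ℕ) [Fact (Nat.Prime d)]
    (ρ : Mat d n) (S : AddSubgroup (QV d n × QV d n)) : Prop :=
  Nat.card S = d ^ n ∧
    ∃ ψ : QV d n → ℂ, ψ ≠ 0 ∧
      ρ = Matrix.of (fun a b => ψ a * starRingEnd ℂ (ψ b)) ∧
      ∀ pq ∈ S, ∃ c : ℂ, (weyl d n pq.1 pq.2).mulVec ψ = c • ψ

/-- `ρ` is a pure stabilizer state. -/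
noncomputable def IsPureStabilizer (d n : ℕ) [Fact (Nat.Prime d)] (ρ : Mat d n) : Prop :=
  ∃ S : AddSubgroup (QV d n × QV d n), IsPureStabilizerWithGroup d n ρ S

/-- `ρ` is a stabilizer state: a convex combination of pure stabilizer states. -/
noncomputable def IsStabilizerState (d n : ℕ) [Fact (Nat.Prime d)] (ρ : Mat d n) : Prop :=
  ∃ (m : ℕ) (p : Fin m → ℝ) (τ : Fin m → Mat d n),
    (∀ i, 0 ≤ p i) ∧ ∑ i, p i = 1 ∧ (∀ i, IsPureStabilizer d n (τ i)) ∧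
    ρ = ∑ i, (p i : ℂ) • τ i

/-- `U` is a Clifford unitary: a unitary mapping each Weyl operator, under conjugation,
to a complex phase times a Weyl operator. -/
noncomputable def IsClifford (d n : ℕ) [Fact (Nat.Prime d)] (U : Mat d n) : Prop :=
  U ∈ Matrix.unitaryGroup (QV d n) ℂ ∧
    ∀ pq : QV d n × QV d n, ∃ (c : ℂ) (pq' : QV d n × QV d n),
      ‖c‖ = 1 ∧ U * weyl d n pq.1 pq.2 * Uᴴ = c • weyl d n pq'.1 pq'.2

/-- The divergence-based quantum Fisher information `J(ρ; H) = Tr[ρ [H,[H, log ρ]]]`. -/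
noncomputable def fisherJ {d n : ℕ} [Fact (Nat.Prime d)] (ρ H : Mat d n) : ℝ :=
  (ρ * (H * (H * matLog ρ - matLog ρ * H) - (H * matLog ρ - matLog ρ * H) * H)).trace.re

/-- Embed a single-qudit operator at site `k` of an `n`-qudit system
(tensored with the identity elsewhere). -/
noncomputable def embedAt (d n : ℕ) (k : Fin n) (M : Matrix (ZMod d) (ZMod d) ℂ) :
    Mat d n :=
  Matrix.of fun v w => if ∀ i, i ≠ k → v i = w i then M (v k) (w k) else 0

/-- The rank-one projection `H_j^Z = |j⟩⟨j|` onto the eigenvector of `Z`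
with eigenvalue `ξ^j`. -/
noncomputable def projZ (d : ℕ) (j : ZMod d) : Matrix (ZMod d) (ZMod d) ℂ :=
  Matrix.of fun a b => if a = j ∧ b = j then 1 else 0

/-- The rank-one projection `H_j^X` onto the eigenvector of `X` with eigenvalue `ξ^j`;
its entries are `(H_j^X)_{a b} = d⁻¹ ξ^{j(b-a)}`. -/
noncomputable def projX (d : ℕ) (j : ZMod d) : Matrix (ZMod d) (ZMod d) ℂ :=
  Matrix.of fun a b => (d : ℂ)⁻¹ * ch d (j * (b - a))

/-- Total Fisher information
`J(ρ) = ∑_{k=1}^n ∑_{j ∈ ℤ_d} J(ρ; H_j^{X_k}) + J(ρ; H_j^{Z_k})`. -/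
noncomputable def fisherTotal (d n : ℕ) [Fact (Nat.Prime d)] (ρ : Mat d n) : ℝ :=
  ∑ k : Fin n, ∑ j : ZMod d,
    (fisherJ ρ (embedAt d n k (projX d j)) + fisherJ ρ (embedAt d n k (projZ d j)))

/-- Holevo capacity of a channel `E`:
`χ(E) = sup H(∑ p_i E(ρ_i)) - ∑ p_i H(E(ρ_i))` over finite ensembles of states. -/
noncomputable def holevoCap (d n : ℕ) [Fact (Nat.Prime d)] (E : Mat d n → Mat d n) : ℝ :=
  ⨆ m : ℕ, ⨆ p : Fin m → ℝ, ⨆ ρs : Fin m → Mat d n,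
    ⨆ _ : (∀ i, 0 ≤ p i) ∧ ∑ i, p i = 1 ∧ ∀ i, IsState d n (ρs i),
      (vnEnt (∑ i, (p i : ℂ) • E (ρs i)) - ∑ i, p i * vnEnt (E (ρs i)))

/-- Hilbert–Schmidt norm `‖A‖₂ = (Tr[A†A])^{1/2}`. -/
noncomputable def hsNorm {d n : ℕ} [Fact (Nat.Prime d)] (A : Mat d n) : ℝ :=
  Real.sqrt ((Aᴴ * A).trace.re)

/-- Trace norm `‖A‖₁ = Tr[(A†A)^{1/2}]`. -/
noncomputable def trNorm {d n : ℕ} [Fact (Nat.Prime d)] (A : Mat d n) : ℝ :=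
  (matRpow (Aᴴ * A) (2⁻¹ : ℝ)).trace.re

/-- Tensor product of an `n₁`-qudit operator with an `n₂`-qudit operator,
as an `(n₁+n₂)`-qudit operator. -/
def tensorMat (d n₁ n₂ : ℕ) (ρ₁ : Mat d n₁) (ρ₂ : Mat d n₂) : Mat d (n₁ + n₂) :=
  Matrix.of fun v w =>
    ρ₁ (fun i => v (Fin.castAdd n₂ i)) (fun i => w (Fin.castAdd n₂ i)) *
    ρ₂ (fun j => v (Fin.natAdd n₁ j)) (fun j => w (Fin.natAdd n₁ j))

/-! ### Qubit (`d = 2`) specific definitions -/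

/-- The `n`-qubit Weyl (Pauli) operator `w(p,q) = ⊗_i i^{-p_i q_i} Z^{p_i} X^{q_i}`. -/
noncomputable def weyl2 (n : ℕ) (p q : Fin n → ZMod 2) :
    Matrix (Fin n → ZMod 2) (Fin n → ZMod 2) ℂ :=
  Matrix.of fun k' k =>
    if k' = k + q then
      ∏ i, ((-Complex.I) ^ ((p i).val * (q i).val) *
        (-1 : ℂ) ^ ((p i * (k i + q i)).val))
    else 0

/-- The `n`-qubit characteristic function `Ξ_ρ(p,q) = Tr[ρ w(p,q)†]`. -/
noncomputable def xi2 (n : ℕ) (ρ : Matrix (Fin n → ZMod 2) (Fin n → ZMod 2) ℂ)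
    (pq : (Fin n → ZMod 2) × (Fin n → ZMod 2)) : ℂ :=
  (ρ * (weyl2 n pq.1 pq.2)ᴴ).trace

/-- The logarithmic magic gap
`LMG(ρ) = -log₂ max{|Ξ_ρ(p,q)| : Ξ_ρ(p,q) ≠ 0, |Ξ_ρ(p,q)| ≠ 1}` (`0` if the set is
empty). -/
noncomputable def lmg (n : ℕ) (ρ : Matrix (Fin n → ZMod 2) (Fin n → ZMod 2) ℂ) : ℝ :=
  let s : Finset ℝ :=
    (Finset.univ.filter fun pq : (Fin n → ZMod 2) × (Fin n → ZMod 2) =>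
      xi2 n ρ pq ≠ 0 ∧ ‖xi2 n ρ pq‖ ≠ 1).image
      fun pq => ‖xi2 n ρ pq‖
  if h : s.Nonempty then -Real.logb 2 (s.max' h) else 0

/-- `U` is an `n`-qubit Clifford unitary. -/
noncomputable def IsClifford2 (n : ℕ) (U : Matrix (Fin n → ZMod 2) (Fin n → ZMod 2) ℂ) :
    Prop :=
  U ∈ Matrix.unitaryGroup (Fin n → ZMod 2) ℂ ∧
    ∀ pq : (Fin n → ZMod 2) × (Fin n → ZMod 2),
      ∃ (c : ℂ) (pq' : (Fin n → ZMod 2) × (Fin n → ZMod 2)),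
        ‖c‖ = 1 ∧ U * weyl2 n pq.1 pq.2 * Uᴴ = c • weyl2 n pq'.1 pq'.2

/-- The T gate `diag(1, e^{iπ/4})` acting on qubit `k` of an `n`-qubit system. -/
noncomputable def tGateAt (n : ℕ) (k : Fin n) :
    Matrix (Fin n → ZMod 2) (Fin n → ZMod 2) ℂ :=
  embedAt 2 n k (Matrix.of fun a b =>
    if a = b then (if a = 0 then 1 else Complex.exp (Real.pi * Complex.I / 4)) else 0)

/-- An `n`-qubit state: positive semidefinite with trace one. -/
def IsState2 (n : ℕ) (ρ : Matrix (Fin n → ZMod 2) (Fin n → ZMod 2) ℂ) : Prop :=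
  ρ.PosSemidef ∧ ρ.trace = 1

end PaperQI

/-! Write a stabilizer state as a finite sum of `|ψ⟩⟨ψ|` with `ψ` a stabilizer function on `ℤ_d^n`.
The unitary `U` permutes the basis by the inverse of the linear automorphism
`e (i, j) = (g₀₀ i + g₁₀ j, g₀₁ i + g₁₁ j)`, so `|ψ⟩⟨ψ| ⊠ |φ⟩⟨φ|` is the sum over `j` of the
`|θ⟩⟨θ|` with `θ x = (ψ ⊗ φ) (e (x, j))`. Each `θ` is the pullback of the stabilizer function
`ψ ⊗ φ` along an affine map, and stabilizer functions are stable under such pullbacks: on spaces of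
Weyl labels the pullback is a symplectic reduction, which preserves the property of having at least
half the dimension of phase space. -/

namespace PaperQI

section LabelSpaces

open Module LinearMap

variable {F V W : Type*} [Field F] [AddCommGroup V] [Module F V] [AddCommGroup W] [Module F W]

lemma exists_le_finrank_eq (S : Submodule F V) {k : ℕ}
    (hk : k ≤ finrank F S) : ∃ T ≤ S, finrank F T = k := by
  obtain ⟨v, hv⟩ := exists_linearIndependent_of_le_finrank hk
  refine ⟨Submodule.span F (Set.range fun i ↦ (v i : V)), ?_, ?_⟩
  · exact Submodule.span_le.mpr (Set.range_subset_iff.mpr fun i ↦ (v i).2)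
  · have hv' : LinearIndependent F fun i ↦ (v i : V) := hv.map' S.subtype S.ker_subtype
    simpa using finrank_span_eq_card hv'

lemma finrank_submodule_prod [FiniteDimensional F V] [FiniteDimensional F W]
    (S : Submodule F V) (T : Submodule F W) :
    finrank F (S.prod T) = finrank F S + finrank F T := by
  have hrange : range (S.subtype.prodMap T.subtype) = S.prod T := by
    rw [range_prodMap, S.range_subtype, T.range_subtype]
  rw [← hrange, finrank_range_of_inj (S.injective_subtype.prodMap T.injective_subtype),
    finrank_prod]

lemma finrank_map_add_finrank_inf_ker [FiniteDimensional F V] (g : V →ₗ[F] W)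
    (S : Submodule F V) :
    finrank F (S.map g) + finrank F (S ⊓ ker g : Submodule F V) = finrank F S := by
  rw [← finrank_range_add_finrank_ker (g.domRestrict S), range_domRestrict, ker_domRestrict,
    ← Submodule.map_comap_subtype,
    (Submodule.equivMapOfInjective S.subtype S.injective_subtype _).finrank_eq]

lemma finrank_comap_add_finrank_range_sup [FiniteDimensional F V] [FiniteDimensional F W]
    (g : V →ₗ[F] W) (S : Submodule F W) :
    finrank F (S.comap g) + finrank F (range g ⊔ S : Submodule F W) =
      finrank F V + finrank F S := by
  have hcomap := finrank_map_add_finrank_inf_ker g (S.comap g)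
  rw [Submodule.map_comap_eq, inf_eq_right.mpr (ker_le_comap g)] at hcomap
  have hsup := Submodule.finrank_sup_add_finrank_inf_eq (range g) S
  have hrank := g.finrank_range_add_finrank_ker
  omega

/-- The pullback along `f : W → V` of a space of phase-space labels `(p, q) ∈ V* × V`: it consists
of the `(p ∘ f, q) ∈ W* × W` with `(p, f q) ∈ S`. It labels Weyl operators that stabilize `ψ ∘ f`
when `S` labels Weyl operators that stabilize `ψ`. -/
def labelPullback (f : W →ₗ[F] V) (S : Submodule F (Dual F V × V)) :
    Submodule F (Dual F W × W) :=
  (S.comap (id.prodMap f)).map (f.dualMap.prodMap id)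

lemma finrank_comap_inf_ker_le [FiniteDimensional F V] (f : W →ₗ[F] V)
    {S : Submodule F (Dual F V × V)} (hS : ∀ p : Dual F V, (p, 0) ∈ S → ∀ s ∈ S, p s.2 = 0) :
    finrank F (S.comap (id.prodMap f) ⊓ ker (f.dualMap.prodMap id) :
        Submodule F (Dual F V × W)) ≤
      finrank F (range f ⊔ S.map (snd F _ _) : Submodule F V).dualAnnihilator := by
  refine le_trans (Submodule.finrank_mono ?_) (Submodule.finrank_map_le (inl F _ W) _)
  rintro ⟨p, q⟩ ⟨hpq, hker⟩
  obtain ⟨hp, rfl⟩ : f.dualMap p = 0 ∧ q = 0 := by simpa using hker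
  have hpS : (p, 0) ∈ S := by simpa using hpq
  refine ⟨p, (Submodule.mem_dualAnnihilator p).mpr fun v hv ↦ ?_, rfl⟩
  obtain ⟨_, ⟨w, rfl⟩, _, ⟨s, hs, rfl⟩, rfl⟩ := Submodule.mem_sup.mp hv
  simpa [hS p hpS s hs] using LinearMap.congr_fun hp w

lemma finrank_range_prodMap_sup_le [FiniteDimensional F V] (f : W →ₗ[F] V)
    (S : Submodule F (Dual F V × V)) :
    finrank F (range ((id : Dual F V →ₗ[F] Dual F V).prodMap f) ⊔ S :
        Submodule F (Dual F V × V)) ≤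
      finrank F V + finrank F (range f ⊔ S.map (snd F _ _) : Submodule F V) := by
  calc
    _ ≤ finrank F ((⊤ : Submodule F (Dual F V)).prod (range f ⊔ S.map (snd F _ _))) := by
      refine Submodule.finrank_mono (sup_le ?_ fun s hs ↦ ?_)
      · rintro _ ⟨s, rfl⟩
        exact ⟨trivial, Submodule.mem_sup_left ⟨s.2, rfl⟩⟩
      · exact ⟨trivial, Submodule.mem_sup_right ⟨s, hs, rfl⟩⟩
    _ = _ := by rw [finrank_submodule_prod, finrank_top, Subspace.dual_finrank_eq]

theorem finrank_add_finrank_le_finrank_labelPullback [FiniteDimensional F V]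
    [FiniteDimensional F W] (f : W →ₗ[F] V) {S : Submodule F (Dual F V × V)}
    (hS : ∀ p : Dual F V, (p, 0) ∈ S → ∀ s ∈ S, p s.2 = 0) :
    finrank F S + finrank F W ≤ finrank F V + finrank F (labelPullback f S) := by
  have h_comap := finrank_comap_add_finrank_range_sup (id.prodMap f) S
  rw [finrank_prod, Subspace.dual_finrank_eq] at h_comap
  have h_map := finrank_map_add_finrank_inf_ker (f.dualMap.prodMap id) (S.comap (id.prodMap f))
  have h_annihilator := Subspace.finrank_add_finrank_dualAnnihilator_eq
    (range f ⊔ S.map (snd F _ _))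
  have h_range := finrank_range_prodMap_sup_le f S
  have h_ker := finrank_comap_inf_ker_le f hS
  rw [labelPullback]
  omega

end LabelSpaces

section StabilizerFunctions

open Module

variable {F V W R : Type*} [Field F] [AddCommGroup V] [Module F V] [AddCommGroup W] [Module F W]
  [CommRing R] {χ : AddChar F R} {ψ : V → R} {φ : W → R}

/-- `ψ` is an eigenvector of the Weyl operator with label `(p, q) ∈ V* × V`, the modulation
by `χ ∘ p` of the translation by `q`. Its phase `ξ^(±2⁻¹ p·q)` is absorbed into the eigenvalue `c`,
so that no division by two is needed. -/
def IsWeylEigenfunction (χ : AddChar F R) (ψ : V → R) (s : Dual F V × V) : Prop :=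
  ∃ c, ∀ v, χ (s.1 v) * ψ (v - s.2) = c * ψ v

/-- `ψ` is zero or, up to normalization, a stabilizer vector: it is a common eigenvector of the Weyl
operators with labels in a subspace of dimension at least `dim V`. The inequality is easier to pull
back than the equality, which can be restored by shrinking the subspace. -/
def IsStabilizerFunction (χ : AddChar F R) (ψ : V → R) : Prop :=
  ∃ S : Submodule F (Dual F V × V), finrank F V ≤ finrank F S ∧
    ∀ s ∈ S, IsWeylEigenfunction χ ψ s

lemma IsWeylEigenfunction.const_smul {s : Dual F V × V} (h : IsWeylEigenfunction χ ψ s) (a : R) :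
    IsWeylEigenfunction χ (a • ψ) s := by
  obtain ⟨c, hc⟩ := h
  refine ⟨c, fun v ↦ ?_⟩
  rw [Pi.smul_apply, Pi.smul_apply, mul_smul_comm, hc, mul_smul_comm]

lemma IsWeylEigenfunction.tensor {s : Dual F V × V} {t : Dual F W × W}
    (hs : IsWeylEigenfunction χ ψ s) (ht : IsWeylEigenfunction χ φ t) :
    IsWeylEigenfunction χ (fun x : V × W ↦ ψ x.1 * φ x.2) (s.1.coprod t.1, (s.2, t.2)) := by
  obtain ⟨c, hc⟩ := hs
  obtain ⟨e, he⟩ := ht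
  refine ⟨c * e, fun x ↦ ?_⟩
  simp only [LinearMap.coprod_apply, AddChar.map_add_eq_mul, Prod.fst_sub, Prod.snd_sub]
  linear_combination χ (t.1 x.2) * φ (x.2 - t.2) * hc x.1 + c * ψ x.1 * he x.2

lemma IsWeylEigenfunction.comp_affineMap {f : W →ᵃ[F] V} {p : Dual F V} {q : W}
    (h : IsWeylEigenfunction χ ψ (p, f.linear q)) :
    IsWeylEigenfunction χ (ψ ∘ f) (p ∘ₗ f.linear, q) := by
  obtain ⟨c, hc⟩ := h
  refine ⟨χ (-p (f 0)) * c, fun w ↦ ?_⟩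
  have h_sub : f (w - q) = f w - f.linear q := by
    simpa [sub_eq_neg_add] using f.map_vadd w (-q)
  have h_linear : p (f.linear w) = -p (f 0) + p (f w) := by
    rw [f.decomp', Pi.sub_apply, map_sub, neg_add_eq_sub]
  simp only [Function.comp_apply, LinearMap.comp_apply, h_sub, h_linear, AddChar.map_add_eq_mul]
  rw [mul_assoc, hc, mul_assoc]

lemma isStabilizerFunction_const (a : R) : IsStabilizerFunction χ (fun _ : V ↦ a) := by
  refine ⟨LinearMap.range (LinearMap.inr F (Dual F V) V), ?_, ?_⟩
  · rw [LinearMap.finrank_range_of_inj LinearMap.inr_injective]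
  · rintro _ ⟨q, rfl⟩
    exact ⟨1, fun v ↦ by simp⟩

lemma IsStabilizerFunction.const_smul (h : IsStabilizerFunction χ ψ) (a : R) :
    IsStabilizerFunction χ (a • ψ) := by
  obtain ⟨S, hdim, hS⟩ := h
  exact ⟨S, hdim, fun s hs ↦ (hS s hs).const_smul a⟩

lemma IsStabilizerFunction.tensor [FiniteDimensional F V] [FiniteDimensional F W]
    (hψ : IsStabilizerFunction χ ψ) (hφ : IsStabilizerFunction χ φ) :
    IsStabilizerFunction χ fun x : V × W ↦ ψ x.1 * φ x.2 := by
  obtain ⟨S, hdim_S, hS⟩ := hψ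
  obtain ⟨T, hdim_T, hT⟩ := hφ
  let e := LinearEquiv.prodProdProdComm F (Dual F V) V (Dual F W) W ≪≫ₗ
    (dualProdDualEquivDual F V W).prodCongr (.refl F (V × W))
  refine ⟨(S.prod T).map e.toLinearMap, ?_, ?_⟩
  · rw [LinearEquiv.finrank_map_eq, finrank_submodule_prod, finrank_prod]
    exact add_le_add hdim_S hdim_T
  · rintro _ ⟨⟨s, t⟩, ⟨hs, ht⟩, rfl⟩
    exact (hS s hs).tensor (hT t ht)

section Isotropy

variable [IsDomain R]

lemma IsWeylEigenfunction.apply_add_ne_zero {s : Dual F V × V} (h : IsWeylEigenfunction χ ψ s)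
    {v : V} (hv : ψ v ≠ 0) : ψ (v + s.2) ≠ 0 := by
  obtain ⟨c, hc⟩ := h
  intro h_zero
  have h_eigen := hc (v + s.2)
  rw [add_sub_cancel_right, h_zero, mul_zero] at h_eigen
  exact mul_ne_zero (χ.val_isUnit _).ne_zero hv h_eigen

lemma IsWeylEigenfunction.char_apply_eq_one (hψ : ψ ≠ 0) {p : Dual F V} {s : Dual F V × V}
    (hp : IsWeylEigenfunction χ ψ (p, 0)) (hs : IsWeylEigenfunction χ ψ s) : χ (p s.2) = 1 := by
  obtain ⟨v, hv⟩ := Function.ne_iff.mp hψ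
  obtain ⟨c, hc⟩ := hp
  have h_const {w : V} (hw : ψ w ≠ 0) : χ (p w) = c :=
    mul_right_cancel₀ hw (by simpa using hc w)
  have h_add := h_const (hs.apply_add_ne_zero hv)
  rw [map_add, AddChar.map_add_eq_mul, h_const hv] at h_add
  refine mul_left_cancel₀ ?_ (h_add.trans (mul_one c).symm)
  exact h_const hv ▸ (χ.val_isUnit _).ne_zero

lemma apply_eq_zero_of_isWeylEigenfunction (hχ : χ ≠ 1) (hψ : ψ ≠ 0)
    {S : Submodule F (Dual F V × V)} (hS : ∀ s ∈ S, IsWeylEigenfunction χ ψ s)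
    {p : Dual F V} (hp : (p, 0) ∈ S) {s : Dual F V × V} (hs : s ∈ S) : p s.2 = 0 := by
  obtain ⟨a, ha⟩ := AddChar.ne_one_iff.mp hχ
  by_contra hne
  have h_smul : ((a / p s.2) • p, (0 : V)) ∈ S := by
    simpa using S.smul_mem (a / p s.2) hp
  have h_one := (hS _ h_smul).char_apply_eq_one hψ (hS s hs)
  rw [LinearMap.smul_apply, smul_eq_mul, div_mul_cancel₀ _ hne] at h_one
  exact ha h_one

theorem IsStabilizerFunction.comp_affineMap [FiniteDimensional F V] [FiniteDimensional F W]
    (hχ : χ ≠ 1) (hψ : IsStabilizerFunction χ ψ) (f : W →ᵃ[F] V) :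
    IsStabilizerFunction χ (ψ ∘ f) := by
  obtain rfl | hne := eq_or_ne ψ 0
  · exact isStabilizerFunction_const 0
  obtain ⟨S, hdim, hS⟩ := hψ
  refine ⟨labelPullback f.linear S, ?_, ?_⟩
  · have := finrank_add_finrank_le_finrank_labelPullback f.linear fun p hp s hs ↦
      apply_eq_zero_of_isWeylEigenfunction hχ hne hS hp hs
    omega
  · rintro _ ⟨s, hs, rfl⟩
    exact (hS _ hs).comp_affineMap

end Isotropy

end StabilizerFunctions

section BasisChange

variable {F M R : Type*} [Field F] [AddCommGroup M] [Module F M] [CommRing R]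
  {g00 g01 g10 g11 : F}

/-- The automorphism `(i, j) ↦ (g₀₀ i + g₁₀ j, g₀₁ i + g₁₁ j)` of `M × M`; on `M = ℤ_d^n` it is the
inverse of the permutation of basis labels given by `U`. -/
def convEquiv (hdet : g00 * g11 - g01 * g10 ≠ 0) : (M × M) ≃ₗ[F] M × M where
  toFun x := (g00 • x.1 + g10 • x.2, g01 • x.1 + g11 • x.2)
  map_add' x y := by ext <;> simp only [Prod.fst_add, Prod.snd_add] <;> module
  map_smul' a x := by
    ext <;> simp only [Prod.smul_fst, Prod.smul_snd, RingHom.id_apply] <;> module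
  invFun y := (((g00 * g11 - g01 * g10)⁻¹ * g11) • y.1 - ((g00 * g11 - g01 * g10)⁻¹ * g10) • y.2,
    (-((g00 * g11 - g01 * g10)⁻¹ * g01)) • y.1 + ((g00 * g11 - g01 * g10)⁻¹ * g00) • y.2)
  left_inv x := by ext <;> match_scalars <;> field_simp <;> ring
  right_inv y := by ext <;> match_scalars <;> field_simp <;> ring

/-- The component with second label `j` of `U (ψ ⊗ φ)`, as a function of the first label. The
partial trace in `|ψ⟩⟨ψ| ⊠ |φ⟩⟨φ|` is the sum over `j` of `|θ⟩⟨θ|`, where `θ` is this component. -/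
def convFunction (hdet : g00 * g11 - g01 * g10 ≠ 0) (ψ φ : M → R) (j : M) : M → R :=
  fun x ↦ ψ (convEquiv hdet (x, j)).1 * φ (convEquiv hdet (x, j)).2

lemma exists_convFunction_ne_zero [NoZeroDivisors R] (hdet : g00 * g11 - g01 * g10 ≠ 0)
    {ψ φ : M → R} (hψ : ψ ≠ 0) (hφ : φ ≠ 0) : ∃ j, convFunction hdet ψ φ j ≠ 0 := by
  obtain ⟨a, ha⟩ := Function.ne_iff.mp hψ
  obtain ⟨b, hb⟩ := Function.ne_iff.mp hφ
  obtain ⟨⟨x, j⟩, hxj⟩ := (convEquiv hdet).surjective (a, b)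
  refine ⟨j, Function.ne_iff.mpr ⟨x, ?_⟩⟩
  rw [convFunction, hxj]
  exact mul_ne_zero ha hb

lemma isStabilizerFunction_convFunction [IsDomain R] [FiniteDimensional F M] {χ : AddChar F R}
    (hχ : χ ≠ 1) (hdet : g00 * g11 - g01 * g10 ≠ 0) {ψ φ : M → R}
    (hψ : IsStabilizerFunction χ ψ) (hφ : IsStabilizerFunction χ φ) (j : M) :
    IsStabilizerFunction χ (convFunction hdet ψ φ j) := by
  let f : M →ᵃ[F] M × M := (convEquiv hdet).toLinearMap.toAffineMap.comp
    ((AffineMap.id F M).prod (AffineMap.const F M j))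
  have h_comp : convFunction hdet ψ φ j = (fun x : M × M ↦ ψ x.1 * φ x.2) ∘ f := rfl
  rw [h_comp]
  exact (hψ.tensor hφ).comp_affineMap hχ f

end BasisChange

section RankOneSums

lemma vecMulVec_star_sqrt_smul {ι : Type*} {r : ℝ} (hr : 0 ≤ r) (ψ : ι → ℂ) :
    vecMulVec ((√r : ℂ) • ψ) (star ((√r : ℂ) • ψ)) = (r : ℂ) • vecMulVec ψ (star ψ) := by
  rw [star_smul, smul_vecMulVec, vecMulVec_smul, smul_smul, Complex.star_def, Complex.conj_ofReal,
    ← Complex.ofReal_mul, Real.mul_self_sqrt hr]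

lemma kron_sum_vecMulVec {d n : ℕ} {ι κ : Type*} [Fintype ι] [Fintype κ] (ψ : ι → QV d n → ℂ)
    (φ : κ → QV d n → ℂ) :
    kron (∑ i, vecMulVec (ψ i) (star (ψ i))) (∑ k, vecMulVec (φ k) (star (φ k))) =
      ∑ t : ι × κ, vecMulVec (fun x ↦ ψ t.1 x.1 * φ t.2 x.2)
        (star fun x ↦ ψ t.1 x.1 * φ t.2 x.2) := by
  ext x y
  simp only [kron, of_apply, Matrix.sum_apply, vecMulVec_apply, Pi.star_apply, star_mul',
    Finset.sum_mul_sum, Fintype.sum_prod_type]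
  exact Finset.sum_congr rfl fun i _ ↦ Finset.sum_congr rfl fun k _ ↦ by ring

end RankOneSums

section Qudits

open Module

variable {d n : ℕ} [Fact (Nat.Prime d)] {g00 g01 g10 g11 : ZMod d}

lemma ch_eq_stdAddChar : ch d = ZMod.stdAddChar (N := d) := by
  ext z
  rw [ZMod.stdAddChar_apply, ZMod.toCircle_apply, ch]

lemma stdAddChar_ne_one : ZMod.stdAddChar (N := d) ≠ 1 := by
  simpa using ZMod.isPrimitive_stdAddChar d one_ne_zero

lemma weyl_mulVec_apply (p q : QV d n) (ψ : QV d n → ℂ) (x : QV d n) :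
    (weyl d n p q *ᵥ ψ) x =
      ZMod.stdAddChar (p ⬝ᵥ (x - q) + (2 : ZMod d)⁻¹ * p ⬝ᵥ q) * ψ (x - q) := by
  simp only [mulVec, dotProduct, weyl, of_apply, ← sub_eq_iff_eq_add, ite_mul, zero_mul,
    Finset.sum_ite_eq, Finset.mem_univ, if_true, ch_eq_stdAddChar]
  rfl

/-- The label `(p, q)` of a Weyl operator, with `p` regarded as the linear form `p ⬝ᵥ ·`. -/
def weylLabelEquiv (d n : ℕ) :
    (QV d n × QV d n) ≃ₗ[ZMod d] Dual (ZMod d) (QV d n) × QV d n :=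
  (dotProductEquiv (ZMod d) (Fin n)).prodCongr (.refl _ _)

lemma exists_weyl_mulVec_eq_smul_iff {ψ : QV d n → ℂ} {s : QV d n × QV d n} :
    (∃ c : ℂ, weyl d n s.1 s.2 *ᵥ ψ = c • ψ) ↔
      IsWeylEigenfunction (ZMod.stdAddChar (N := d)) ψ (weylLabelEquiv d n s) := by
  set ω : ℂ := ZMod.stdAddChar ((2 : ZMod d)⁻¹ * s.1 ⬝ᵥ s.2 - s.1 ⬝ᵥ s.2) with hω
  have hω_ne : ω ≠ 0 := (AddChar.val_isUnit _ _).ne_zero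
  have h_apply (x : QV d n) : (weyl d n s.1 s.2 *ᵥ ψ) x =
      ω * (ZMod.stdAddChar (s.1 ⬝ᵥ x) * ψ (x - s.2)) := by
    rw [weyl_mulVec_apply, hω, ← mul_assoc, ← AddChar.map_add_eq_mul, dotProduct_sub]
    ring_nf
  constructor
  · rintro ⟨c, hc⟩
    refine ⟨ω⁻¹ * c, fun x ↦ ?_⟩
    rw [mul_assoc, eq_inv_mul_iff_mul_eq₀ hω_ne]
    exact (h_apply x).symm.trans (congrFun hc x)
  · rintro ⟨c, hc⟩
    refine ⟨ω * c, funext fun x ↦ ?_⟩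
    rw [h_apply, Pi.smul_apply, smul_eq_mul, mul_assoc]
    exact congrArg (ω * ·) (hc x)

lemma natCard_eq_pow_iff_finrank_eq {V : Type*} [AddCommGroup V] [Module (ZMod d) V]
    [FiniteDimensional (ZMod d) V] {k : ℕ} : Nat.card V = d ^ k ↔ finrank (ZMod d) V = k := by
  rw [Module.natCard_eq_pow_finrank (K := ZMod d), Nat.card_zmod]
  exact (Nat.pow_right_injective (Fact.out : d.Prime).two_le).eq_iff

theorem isPureStabilizer_iff {τ : Mat d n} : IsPureStabilizer d n τ ↔
    ∃ ψ : QV d n → ℂ, ψ ≠ 0 ∧ IsStabilizerFunction (ZMod.stdAddChar (N := d)) ψ ∧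
      τ = vecMulVec ψ (star ψ) := by
  have h_dim : finrank (ZMod d) (QV d n) = n := by simp
  constructor
  · rintro ⟨S, hcard, ψ, hne, rfl, hS⟩
    refine ⟨ψ, hne, ⟨(AddSubgroup.toZModSubmodule d S).map (weylLabelEquiv d n).toLinearMap,
      ?_, ?_⟩, rfl⟩
    · rw [LinearEquiv.finrank_map_eq, h_dim]
      exact (natCard_eq_pow_iff_finrank_eq
        (V := AddSubgroup.toZModSubmodule d S).mp hcard).ge
    · rintro _ ⟨s, hs, rfl⟩
      exact exists_weyl_mulVec_eq_smul_iff.mp (hS s hs)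
  · rintro ⟨ψ, hne, ⟨S, hdim, hS⟩, rfl⟩
    obtain ⟨T, hTS, hT⟩ := exists_le_finrank_eq S (h_dim ▸ hdim)
    refine ⟨(T.map (weylLabelEquiv d n).symm.toLinearMap).toAddSubgroup, ?_, ψ, hne, rfl, ?_⟩
    · refine natCard_eq_pow_iff_finrank_eq.mpr ?_
      exact (LinearEquiv.finrank_map_eq _ _).trans hT
    · rintro _ ⟨t, ht, rfl⟩
      refine exists_weyl_mulVec_eq_smul_iff.mpr ?_
      simpa using hS t (hTS ht)

lemma IsStabilizerState.exists_eq_sum_vecMulVec {ρ : Mat d n} (h : IsStabilizerState d n ρ) :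
    ∃ (m : ℕ) (ψ : Fin m → QV d n → ℂ),
      (∀ i, IsStabilizerFunction (ZMod.stdAddChar (N := d)) (ψ i)) ∧ (∃ i, ψ i ≠ 0) ∧
        ρ = ∑ i, vecMulVec (ψ i) (star (ψ i)) := by
  obtain ⟨m, w, τ, hw, hw_sum, hτ, rfl⟩ := h
  choose ψ hne hψ hτψ using fun i ↦ isPureStabilizer_iff.mp (hτ i)
  refine ⟨m, fun i ↦ (√(w i) : ℂ) • ψ i, fun i ↦ (hψ i).const_smul _, ?_, ?_⟩
  · obtain ⟨i, -, hi⟩ : ∃ i ∈ Finset.univ, w i ≠ 0 :=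
      Finset.exists_ne_zero_of_sum_ne_zero (hw_sum ▸ one_ne_zero)
    have h_sqrt : √(w i) ≠ 0 := (Real.sqrt_ne_zero (hw i)).mpr hi
    exact ⟨i, smul_ne_zero (Complex.ofReal_ne_zero.mpr h_sqrt) (hne i)⟩
  · exact Finset.sum_congr rfl fun i _ ↦ by rw [vecMulVec_star_sqrt_smul (hw i), hτψ]

/-- `IsPureStabilizer` does not normalize its vector, so the number of terms is absorbed into
the vectors to produce weights summing to one. -/
lemma isStabilizerState_sum_vecMulVec {ι : Type*} [Fintype ι] {ψ : ι → QV d n → ℂ}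
    (hψ : ∀ i, IsStabilizerFunction (ZMod.stdAddChar (N := d)) (ψ i)) (hne : ∃ i, ψ i ≠ 0) :
    IsStabilizerState d n (∑ i, vecMulVec (ψ i) (star (ψ i))) := by
  let J := {i // ψ i ≠ 0}
  have : Nonempty J := nonempty_subtype.mpr hne
  let k : ℝ := (Fintype.card J : ℝ)
  have hk : 0 < k := Nat.cast_pos.mpr Fintype.card_pos
  let e : Fin (Fintype.card J) ≃ J := (Fintype.equivFin J).symm
  refine ⟨Fintype.card J, fun _ ↦ k⁻¹, fun i ↦ (k : ℂ) • vecMulVec (ψ (e i)) (star (ψ (e i))),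
    fun _ ↦ (inv_pos.mpr hk).le, ?_, fun i ↦ ?_, ?_⟩
  · simp [k, hk.ne']
  · have h_sqrt : (√k : ℂ) ≠ 0 := Complex.ofReal_ne_zero.mpr (Real.sqrt_pos.mpr hk).ne'
    beta_reduce
    rw [← vecMulVec_star_sqrt_smul hk.le]
    exact isPureStabilizer_iff.mpr ⟨_, smul_ne_zero h_sqrt (e i).2, (hψ _).const_smul _, rfl⟩
  · have h_zero (i : ι) (hi : i ∉ Set.range (Subtype.val ∘ e)) :
        vecMulVec (ψ i) (star (ψ i)) = 0 := by
      have : ψ i = 0 := by_contra fun h ↦ hi ⟨e.symm ⟨i, h⟩, by simp⟩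
      rw [this, zero_vecMulVec]
    refine (Fintype.sum_of_injective _ (Subtype.val_injective.comp e.injective) _ _ h_zero ?_).symm
    intro i
    rw [Complex.ofReal_inv, inv_smul_smul₀ (Complex.ofReal_ne_zero.mpr hk.ne'), Function.comp_apply]

lemma convU_eq_toMatrix (hdet : g00 * g11 - g01 * g10 ≠ 0) :
    convU d n g00 g01 g10 g11 = (convEquiv (M := QV d n) hdet).toEquiv.toPEquiv.toMatrix := by
  ext kl ij
  rw [PEquiv.toMatrix_apply, convU, of_apply]
  congr 1
  rw [Equiv.toPEquiv_apply, Option.mem_some_iff, LinearEquiv.coe_toEquiv,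
    ← LinearEquiv.eq_symm_apply]
  rfl

lemma convU_mul_mul_conjTranspose (hdet : g00 * g11 - g01 * g10 ≠ 0)
    (K : Matrix (QV d n × QV d n) (QV d n × QV d n) ℂ) :
    convU d n g00 g01 g10 g11 * K * (convU d n g00 g01 g10 g11)ᴴ =
      K.submatrix (convEquiv hdet) (convEquiv hdet) := by
  have h_conjTranspose : (convU d n g00 g01 g10 g11)ᴴ =
      (convEquiv (M := QV d n) hdet).toEquiv.symm.toPEquiv.toMatrix := by
    rw [convU_eq_toMatrix hdet, Equiv.toPEquiv_symm, PEquiv.toMatrix_symm]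
    ext x y
    simp [conjTranspose_apply, PEquiv.toMatrix_apply, apply_ite]
  rw [h_conjTranspose, convU_eq_toMatrix hdet, PEquiv.toMatrix_toPEquiv_mul,
    PEquiv.mul_toMatrix_toPEquiv]
  rfl

lemma conv_sum_vecMulVec (hdet : g00 * g11 - g01 * g10 ≠ 0) {ι κ : Type*} [Fintype ι] [Fintype κ]
    (ψ : ι → QV d n → ℂ) (φ : κ → QV d n → ℂ) :
    conv d n g00 g01 g10 g11 (∑ i, vecMulVec (ψ i) (star (ψ i)))
        (∑ k, vecMulVec (φ k) (star (φ k))) =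
      ∑ t : QV d n × ι × κ, vecMulVec (convFunction hdet (ψ t.2.1) (φ t.2.2) t.1)
        (star (convFunction hdet (ψ t.2.1) (φ t.2.2) t.1)) := by
  rw [conv, convU_mul_mul_conjTranspose hdet, kron_sum_vecMulVec]
  ext x y
  simp only [ptrB, of_apply, submatrix_apply, Matrix.sum_apply]
  rw [Fintype.sum_prod_type]
  rfl

end Qudits

theorem statement10_general (d n : ℕ) [Fact (Nat.Prime d)] (g00 g01 g10 g11 : ZMod d)
    (hdet : g00 * g11 - g01 * g10 ≠ 0) (ρ σ : Mat d n) (hρ : IsStabilizerState d n ρ)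
    (hσ : IsStabilizerState d n σ) :
    IsStabilizerState d n (conv d n g00 g01 g10 g11 ρ σ) := by
  obtain ⟨m, ψ, hψ, ⟨i, hi⟩, rfl⟩ := hρ.exists_eq_sum_vecMulVec
  obtain ⟨l, φ, hφ, ⟨k, hk⟩, rfl⟩ := hσ.exists_eq_sum_vecMulVec
  rw [conv_sum_vecMulVec hdet]
  obtain ⟨j, hj⟩ := exists_convFunction_ne_zero hdet hi hk
  exact isStabilizerState_sum_vecMulVec
    (fun t ↦ isStabilizerFunction_convFunction stdAddChar_ne_one hdet (hψ t.2.1) (hφ t.2.2) t.1)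
    ⟨(j, i, k), hj⟩

/-- Convolutional stability: the convolution of two stabilizer
states is a stabilizer state. -/
theorem statement10 (d n : ℕ) [Fact (Nat.Prime d)] (hd : Odd d) (hn : 1 ≤ n)
    (g00 g01 g10 g11 : ZMod d) (h00 : g00 ≠ 0) (h01 : g01 ≠ 0)
    (h10 : g10 ≠ 0) (h11 : g11 ≠ 0) (hdet : g00 * g11 - g01 * g10 ≠ 0)
    (ρ σ : Mat d n) (hρ : IsState d n ρ) (hσ : IsState d n σ)
    (hρs : IsStabilizerState d n ρ) (hσs : IsStabilizerState d n σ) :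
    IsStabilizerState d n (conv d n g00 g01 g10 g11 ρ σ) :=
  statement10_general d n g00 g01 g10 g11 hdet ρ σ hρs hσs

end PaperQI
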